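/- Confidence width at termination of local successive elimination (Lemma 3 of the paper, stated deterministically on the concentration event): let A be a finite set with |A| ≥ 2, K ≥ 1 a natural number, δ ∈ (0,1), c > 2 a real number, and define α(t) = sqrt( log(4·K·|A|·t²/δ) / t ) for integers t ≥ 1. Let r : A → [0,1] have a unique maximizer a₁, set Δ* = r_{a₁} − max_{ℓ ∈ A \ {a₁}} r_ℓ, and suppose r̂ : A × {1,2,…} → ℝ satisfies |r̂_ℓ(t) − r_ℓ| ≤ α(t) for every ℓ ∈ A and integer t ≥ 1. Define S(1) = A and S(t+1) = { ℓ ∈ S(t) : max_{j ∈ S(t)} r̂_j(t) − r̂_ℓ(t) < c·α(t) }. If t̄ ≥ 1 is an integer such that |S(t̄+1)| = 1 and |S(t)| > 1 for all 1 ≤ t ≤ t̄ (i.e., t̄ is the terminal epoch), then α(t̄) < ( c/(c−2)² )·Δ*. -/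

import Mathlib

/-!
On the concentration event, comparing two empirical means costs at most `2 α(t)`. Since `c > 2`,
the best arm is therefore never eliminated, and an arm `ℓ` eliminated in epoch `s` satisfies
`(c - 2) α(s) ≤ r a₁ - r ℓ`. At termination the second-best arm has been eliminated in some epoch
`s ≤ t̄`; as `α` is decreasing, `(c - 2) α(t̄) ≤ (c - 2) α(s) ≤ Δ*`, and `c - 2 < c` gives the
stated bound.
-/

section ConfidenceRadius

open Real Set

theorem antitoneOn_log_mul_sq_div_self {C : ℝ} (hC : 0 < C) :
    AntitoneOn (fun t : ℝ ↦ log (C * t ^ 2) / t) {t | exp 1 ≤ √C * t} := by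
  have log_div_eq (t : ℝ) : log (C * t ^ 2) / t = 2 * √C * (log (√C * t) / (√C * t)) := by
    have hsq : C * t ^ 2 = (√C * t) ^ 2 := by rw [mul_pow, sq_sqrt hC.le]
    have hne : √C ≠ 0 := (sqrt_pos.2 hC).ne'
    rw [hsq, log_pow, mul_div_assoc', mul_right_comm, mul_comm √C t, mul_div_mul_right _ _ hne,
      Nat.cast_ofNat]
  intro s hs t ht hst
  have hmul : √C * s ≤ √C * t := by gcongr
  simp only [log_div_eq]
  refine mul_le_mul_of_nonneg_left ?_ (by positivity)
  exact log_div_self_antitoneOn hs ht hmul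

/-- The confidence radius `α(t)` of an arm set of size `N`, with parameters `K` and `δ`. It takes
the junk value `0` at `t = 0`; epochs start at `1`. -/
noncomputable def confidenceRadius (K N : ℕ) (δ : ℝ) (t : ℕ) : ℝ :=
  √(log (4 * (K : ℝ) * (N : ℝ) * (t : ℝ) ^ 2 / δ) / (t : ℝ))

theorem exp_one_le_sqrt_of_eight_le {C : ℝ} (hC : 8 ≤ C) : exp 1 ≤ √C := by
  refine le_sqrt_of_sq_le (le_trans ?_ hC)
  calc exp 1 ^ 2 ≤ 2.8 ^ 2 := by gcongr; linarith [exp_one_lt_d9]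
    _ ≤ 8 := by norm_num

theorem antitoneOn_confidenceRadius {K N : ℕ} {δ : ℝ} (hKN : 2 ≤ K * N) (hδ0 : 0 < δ)
    (hδ1 : δ ≤ 1) : AntitoneOn (confidenceRadius K N δ) (Ici 1) := by
  have hKN' : (2 : ℝ) ≤ K * N := mod_cast hKN
  have hC : 8 ≤ 4 * (K : ℝ) * N / δ := by
    rw [le_div_iff₀ hδ0]
    linarith
  have mem_antitone_range {t : ℕ} (ht : 1 ≤ t) : exp 1 ≤ √(4 * (K : ℝ) * N / δ) * t :=
    (exp_one_le_sqrt_of_eight_le hC).trans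
      (le_mul_of_one_le_right (sqrt_nonneg _) (mod_cast ht))
  intro s hs t ht hst
  simp only [confidenceRadius, mul_div_right_comm _ (_ ^ 2) δ]
  exact sqrt_le_sqrt <| antitoneOn_log_mul_sq_div_self (by linarith) (mem_antitone_range hs)
    (mem_antitone_range ht) (mod_cast hst)

end ConfidenceRadius

section SuccessiveElimination

open Set

variable {κ 𝕜 : Type*} [Field 𝕜] [LinearOrder 𝕜]

/-- `S` is the sequence of active sets of successive elimination on the arm set `A` with threshold
factor `c`, radii `α` and empirical means `rhat`. Epochs start at `1`, so `S 0` is unconstrained;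
being within `c * α t` of the largest empirical mean is expressed by comparison with every active
arm. -/
structure IsSuccessiveElimination (A : Finset κ) (c : 𝕜) (α : ℕ → 𝕜) (rhat : κ → ℕ → 𝕜)
    (S : ℕ → Finset κ) : Prop where
  one : S 1 = A
  mem_succ_iff : ∀ t : ℕ, 1 ≤ t → ∀ ℓ : κ,
    ℓ ∈ S (t + 1) ↔ ℓ ∈ S t ∧ ∀ j ∈ S t, rhat j t - rhat ℓ t < c * α t

/-- The concentration event: from epoch `1` on, the empirical mean `rhat ℓ t` of every arm of `A`
is within the radius `α t` of its mean `r ℓ`. -/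
def IsConcentrated (A : Finset κ) (r : κ → 𝕜) (α : ℕ → 𝕜) (rhat : κ → ℕ → 𝕜) : Prop :=
  ∀ ℓ ∈ A, ∀ t : ℕ, 1 ≤ t → |rhat ℓ t - r ℓ| ≤ α t

variable {A : Finset κ} {c : 𝕜} {α : ℕ → 𝕜} {r : κ → 𝕜} {rhat : κ → ℕ → 𝕜} {S : ℕ → Finset κ}
  {a ℓ : κ} {t : ℕ}

theorem IsConcentrated.sub_le [IsStrictOrderedRing 𝕜] (hconc : IsConcentrated A r α rhat)
    {j : κ} (hj : j ∈ A) (hℓ : ℓ ∈ A) (ht : 1 ≤ t) :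
    rhat j t - rhat ℓ t ≤ r j - r ℓ + 2 * α t := by
  have hj_le := (abs_le.1 (hconc j hj t ht)).2
  have hℓ_ge := (abs_le.1 (hconc ℓ hℓ t ht)).1
  linarith

namespace IsSuccessiveElimination

theorem subset (hS : IsSuccessiveElimination A c α rhat S) (ht : 1 ≤ t) : S t ⊆ A := by
  have hanti : AntitoneOn S (Ici 1) :=
    antitoneOn_nat_Ici_of_succ_le fun n hn _ h ↦ ((hS.mem_succ_iff n hn _).1 h).1
  exact hS.one ▸ hanti self_mem_Ici ht ht

theorem exists_mem_notMem_succ (hS : IsSuccessiveElimination A c α rhat S) (hℓ : ℓ ∈ A)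
    (hout : ℓ ∉ S (t + 1)) : ∃ s, 1 ≤ s ∧ s ≤ t ∧ ℓ ∈ S s ∧ ℓ ∉ S (s + 1) := by
  induction t with
  | zero => exact absurd (hS.one ▸ hℓ) hout
  | succ t ih =>
    by_cases hin : ℓ ∈ S (t + 1)
    · exact ⟨t + 1, by omega, le_rfl, hin, hout⟩
    · obtain ⟨s, hs1, hst, hs⟩ := ih hin
      exact ⟨s, hs1, by omega, hs⟩

variable [IsStrictOrderedRing 𝕜]

-- A surviving arm has been compared with itself.
theorem radius_pos (hS : IsSuccessiveElimination A c α rhat S) (hc : 0 < c) (ht : 1 ≤ t)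
    (hne : (S (t + 1)).Nonempty) : 0 < α t := by
  obtain ⟨ℓ, hℓ⟩ := hne
  obtain ⟨hℓt, hlt⟩ := (hS.mem_succ_iff t ht ℓ).1 hℓ
  have hself : 0 < c * α t := by simpa using hlt ℓ hℓt
  exact pos_of_mul_pos_right hself hc.le

theorem best_mem_succ (hS : IsSuccessiveElimination A c α rhat S)
    (hconc : IsConcentrated A r α rhat) (hc : 2 < c) (ha : a ∈ A) (hmax : ∀ ℓ ∈ A, r ℓ ≤ r a)
    (hne : (S (t + 1)).Nonempty) : a ∈ S (t + 1) := by
  induction t with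
  | zero => exact hS.one ▸ ha
  | succ t ih =>
    have ht : 1 ≤ t + 1 := by omega
    have hα : 0 < α (t + 1) := hS.radius_pos (by linarith) ht hne
    have hne' : (S (t + 1)).Nonempty := hne.mono fun _ h ↦ ((hS.mem_succ_iff _ ht _).1 h).1
    refine (hS.mem_succ_iff _ ht a).2 ⟨ih hne', fun j hj ↦ ?_⟩
    have hjA : j ∈ A := hS.subset ht hj
    calc rhat j (t + 1) - rhat a (t + 1) ≤ r j - r a + 2 * α (t + 1) := hconc.sub_le hjA ha ht
      _ ≤ 2 * α (t + 1) := by linarith [hmax j hjA]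
      _ < c * α (t + 1) := by gcongr

theorem mul_radius_le_of_mem_of_notMem_succ (hS : IsSuccessiveElimination A c α rhat S)
    (hconc : IsConcentrated A r α rhat) (hmax : ∀ ℓ ∈ A, r ℓ ≤ r a) (ht : 1 ≤ t)
    (hin : ℓ ∈ S t) (hout : ℓ ∉ S (t + 1)) : (c - 2) * α t ≤ r a - r ℓ := by
  obtain ⟨j, hj, hjℓ⟩ : ∃ j ∈ S t, c * α t ≤ rhat j t - rhat ℓ t := by
    simpa [hS.mem_succ_iff t ht, hin] using hout
  have hjA : j ∈ A := hS.subset ht hj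
  have hdiff := hconc.sub_le hjA (hS.subset ht hin) ht
  linarith [hmax j hjA]

theorem mul_radius_le_of_notMem_succ (hS : IsSuccessiveElimination A c α rhat S)
    (hconc : IsConcentrated A r α rhat) (hα : AntitoneOn α (Ici 1)) (hc : 2 ≤ c)
    (hmax : ∀ ℓ ∈ A, r ℓ ≤ r a) (hℓ : ℓ ∈ A) (hout : ℓ ∉ S (t + 1)) :
    (c - 2) * α t ≤ r a - r ℓ := by
  obtain ⟨s, hs1, hst, hins, houts⟩ := hS.exists_mem_notMem_succ hℓ hout
  calc (c - 2) * α t ≤ (c - 2) * α s :=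
        mul_le_mul_of_nonneg_left (hα hs1 (hs1.trans hst) hst) (sub_nonneg.2 hc)
    _ ≤ r a - r ℓ := hS.mul_radius_le_of_mem_of_notMem_succ hconc hmax hs1 hins houts

end IsSuccessiveElimination

theorem lt_div_sq_mul_of_mul_le [IsStrictOrderedRing 𝕜] {x gap : 𝕜} (hc : 2 < c) (hx : 0 < x)
    (h : (c - 2) * x ≤ gap) : x < c / (c - 2) ^ 2 * gap := by
  have hc2 : 0 < c - 2 := sub_pos.2 hc
  have hgap : 0 < gap := (mul_pos hc2 hx).trans_le h
  calc x ≤ gap / (c - 2) := (le_div_iff₀' hc2).2 h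
    _ = (c - 2) / (c - 2) ^ 2 * gap := by field_simp
    _ < c / (c - 2) ^ 2 * gap := by gcongr; linarith

theorem confidence_width_at_termination_general [IsStrictOrderedRing 𝕜] [DecidableEq κ]
    (hS : IsSuccessiveElimination A c α rhat S) (hconc : IsConcentrated A r α rhat)
    (hα : AntitoneOn α (Ici 1)) (hc : 2 < c) (ha : a ∈ A) (hmax : ∀ ℓ ∈ A, r ℓ ≤ r a)
    (hne : (A.erase a).Nonempty) (ht : 1 ≤ t) (hterm : (S (t + 1)).card = 1) :
    α t < c / (c - 2) ^ 2 * (r a - (A.erase a).sup' hne r) := by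
  obtain ⟨ℓ, hℓ, hsup⟩ := Finset.exists_mem_eq_sup' hne r
  obtain ⟨hℓa, hℓA⟩ := Finset.mem_erase.1 hℓ
  have hactive : (S (t + 1)).Nonempty := Finset.card_pos.1 (by omega)
  have ha_mem : a ∈ S (t + 1) := hS.best_mem_succ hconc hc ha hmax hactive
  have hℓ_out : ℓ ∉ S (t + 1) := fun hℓ_mem ↦
    hℓa (Finset.card_le_one.1 hterm.le ℓ hℓ_mem a ha_mem)
  rw [hsup]
  exact lt_div_sq_mul_of_mul_le hc (hS.radius_pos (by linarith) ht hactive)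
    (hS.mul_radius_le_of_notMem_succ hconc hα hc.le hmax hℓA hℓ_out)

end SuccessiveElimination

/-- Confidence width at termination of local successive elimination (Lemma 3 of the paper,
stated deterministically on the concentration event). With `c > 2`, confidence radius
`α(t) = sqrt(log(4 K |A| t² / δ) / t)`, unique best arm `a₁`, gap
`Δ* = r a₁ - max_{ℓ ∈ A \ {a₁}} r ℓ`, concentration of empirical means, and active sets as
in Algorithm 1, if `t̄` is the terminal epoch (`|S(t̄+1)| = 1` and `|S(t)| > 1` for all
`1 ≤ t ≤ t̄`) then `α(t̄) < (c/(c-2)²) Δ*`. -/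
theorem confidence_width_at_termination {κ : Type*} [DecidableEq κ]
    (A : Finset κ) (hA : 2 ≤ A.card) (K : ℕ) (hK : 1 ≤ K)
    (δ : ℝ) (hδ0 : 0 < δ) (hδ1 : δ < 1) (c : ℝ) (hc : 2 < c)
    (α : ℕ → ℝ)
    (hα : ∀ t : ℕ, 1 ≤ t →
      α t = Real.sqrt (Real.log (4 * (K : ℝ) * (A.card : ℝ) * (t : ℝ) ^ 2 / δ) / (t : ℝ)))
    (r : κ → ℝ) (hr : ∀ ℓ ∈ A, r ℓ ∈ Set.Icc (0 : ℝ) 1)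
    (a₁ : κ) (ha₁ : a₁ ∈ A) (hmax : ∀ ℓ ∈ A, ℓ ≠ a₁ → r ℓ < r a₁)
    (rhat : κ → ℕ → ℝ)
    (hconc : ∀ ℓ ∈ A, ∀ t : ℕ, 1 ≤ t → |rhat ℓ t - r ℓ| ≤ α t)
    (S : ℕ → Finset κ) (hS1 : S 1 = A)
    (hSrec : ∀ t : ℕ, 1 ≤ t → ∀ ℓ : κ,
      ℓ ∈ S (t + 1) ↔ ℓ ∈ S t ∧ ∀ j ∈ S t, rhat j t - rhat ℓ t < c * α t)
    (tbar : ℕ) (htbar1 : 1 ≤ tbar)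
    (hterm : (S (tbar + 1)).card = 1)
    (hbefore : ∀ t : ℕ, 1 ≤ t → t ≤ tbar → 1 < (S t).card) :
    α tbar < c / (c - 2) ^ 2 *
      (r a₁ - (A.erase a₁).sup' (by
        rw [← Finset.card_pos, Finset.card_erase_of_mem ha₁]; omega) r) := by
  have hanti : AntitoneOn α (Set.Ici 1) :=
    (antitoneOn_confidenceRadius (hA.trans (Nat.le_mul_of_pos_left _ hK)) hδ0 hδ1.le).congr
      fun t ht ↦ (hα t ht).symm
  have hbest : ∀ ℓ ∈ A, r ℓ ≤ r a₁ := fun ℓ hℓ ↦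
    (eq_or_ne ℓ a₁).elim (fun h ↦ h ▸ le_rfl) fun h ↦ (hmax ℓ hℓ h).le
  exact confidence_width_at_termination_general ⟨hS1, hSrec⟩ hconc hanti hc ha₁ hbest _ htbar1 hterm
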